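/- Let A and A' be n×n integer matrices with determinant ±1 that are shift equivalent over ℤ (there exist integer matrices R, S and a positive integer l with A R = R A', S A = A' S, R S = A^l, S R = (A')^l). Then for every polynomial p(x) ∈ ℤ[x] with p(0) = ±1, the abelian groups ℤⁿ/p(A)ℤⁿ and ℤⁿ/p(A')ℤⁿ are isomorphic. -/

import Mathlib

/-- If the unimodular integer matrices `A, A'` are shift equivalent over `ℤ`,
then for every polynomial `p(x) ∈ ℤ[x]` with `p(0) = ±1` the abelian groups `ℤⁿ/p(A)ℤⁿ` and
`ℤⁿ/p(A')ℤⁿ` are isomorphic. -/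
theorem abelianized_invariant_of_shift_equivalence
    (n : ℕ) (A A' : Matrix (Fin n) (Fin n) ℤ)
    (hA : A.det = 1 ∨ A.det = -1) (hA' : A'.det = 1 ∨ A'.det = -1)
    (R S : Matrix (Fin n) (Fin n) ℤ) (l : ℕ) (hl : 0 < l)
    (h1 : A * R = R * A') (h2 : S * A = A' * S)
    (h3 : R * S = A ^ l) (h4 : S * R = A' ^ l)
    (p : Polynomial ℤ) (hp : p.eval 0 = 1 ∨ p.eval 0 = -1) :
    Nonempty
      (((Fin n → ℤ) ⧸ LinearMap.range (Polynomial.aeval A p).mulVecLin) ≃+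
       ((Fin n → ℤ) ⧸ LinearMap.range (Polynomial.aeval A' p).mulVecLin)) := by
  have hR : IsUnit R.det := by
    have h : IsUnit (R.det * S.det) := by
      rw [← Matrix.det_mul, h3, Matrix.det_pow]
      exact (Int.isUnit_iff.mpr hA).pow l
    exact isUnit_of_mul_isUnit_left h
  have hc : Polynomial.aeval A p * R = R * Polynomial.aeval A' p := by
    clear hp
    induction p using Polynomial.induction_on' with
    | add f g hf hg => rw [map_add, map_add, add_mul, mul_add, hf, hg]
    | monomial k a =>
      have hk : SemiconjBy R (A' ^ k) (A ^ k) := SemiconjBy.pow_right h1.symm k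
      rw [Polynomial.aeval_monomial, Polynomial.aeval_monomial, mul_assoc, ← hk.eq,
        ← mul_assoc, ← mul_assoc, Algebra.commutes]
  let e : (Fin n → ℤ) ≃ₗ[ℤ] (Fin n → ℤ) :=
    Matrix.toLin'OfInv (Matrix.mul_nonsing_inv R hR) (Matrix.nonsing_inv_mul R hR)
  have hc' : Polynomial.aeval A' p * R⁻¹ = R⁻¹ * Polynomial.aeval A p := by
    calc Polynomial.aeval A' p * R⁻¹
        = R⁻¹ * (R * Polynomial.aeval A' p) * R⁻¹ := by
          rw [← mul_assoc, Matrix.nonsing_inv_mul R hR, one_mul]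
      _ = R⁻¹ * Polynomial.aeval A p := by
          rw [← hc, mul_assoc, mul_assoc, Matrix.mul_nonsing_inv R hR, mul_one]
  refine ⟨(Submodule.Quotient.equiv _ _ e ?_).toAddEquiv⟩
  ext v
  simp only [Submodule.mem_map, LinearMap.mem_range, Matrix.mulVecLin_apply]
  constructor
  · rintro ⟨_, ⟨w, rfl⟩, rfl⟩
    refine ⟨R⁻¹.mulVec w, ?_⟩
    change _ = R⁻¹.mulVec _
    rw [Matrix.mulVec_mulVec, Matrix.mulVec_mulVec, hc']
  · rintro ⟨w, rfl⟩
    refine ⟨_, ⟨R.mulVec w, rfl⟩, ?_⟩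
    change R⁻¹.mulVec _ = _
    rw [Matrix.mulVec_mulVec, Matrix.mulVec_mulVec, mul_assoc, hc, ← mul_assoc,
      Matrix.nonsing_inv_mul R hR, one_mul]
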